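/- arXiv:2502.05357 — 10 statements merged into one kernel-verified Lean document; each statement's English description precedes it below -/
import Mathlib

section
/- Let n ≥ 1, let F : ℝⁿ → ℝⁿ be continuously differentiable, let A : ℝⁿ → ℝⁿ be an invertible linear map, let ρ ∈ (0,1), x ∈ ℝⁿ and r > 0, and suppose the Krawczyk condition holds at x with radius r for A and ρ. Then there exists a unique point x* in the closed box B(x,r) with F(x*) = 0, and moreover ‖x − x*‖ ≤ ρ·r. -/
/-- **Krawczyk existence-uniqueness theorem.**
If the Krawczyk condition holds at `x` with radius `r` for an invertible
linear map `A` and `ρ ∈ (0,1)`, then there is a unique zero `x*` of `F` in the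
closed sup-norm ball `B(x,r)`, and `‖x − x*‖ ≤ ρ·r`. -/
theorem krawczyk_exists_unique_zero
    (n : ℕ) (hn : 1 ≤ n)
    (F : (Fin n → ℝ) → (Fin n → ℝ)) (hF : ContDiff ℝ 1 F)
    (A : (Fin n → ℝ) ≃L[ℝ] (Fin n → ℝ))
    (ρ : ℝ) (hρ : ρ ∈ Set.Ioo (0 : ℝ) 1)
    (x : Fin n → ℝ) (r : ℝ) (hr : 0 < r)
    (hK : ∀ z ∈ Metric.closedBall x r, ∀ u : Fin n → ℝ, ‖u‖ ≤ 1 →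
      ‖-A (F x) + r • (u - A ((fderiv ℝ F z) u))‖ ≤ ρ * r) :
    ∃ xs ∈ Metric.closedBall x r,
      F xs = 0 ∧ ‖x - xs‖ ≤ ρ * r ∧
      ∀ y ∈ Metric.closedBall x r, F y = 0 → y = xs := by
  obtain ⟨hρ0, hρ1⟩ := hρ
  have hd : Differentiable ℝ F := hF.differentiable (by norm_num)
  set G : (Fin n → ℝ) → (Fin n → ℝ) := fun y => y - A (F y) with hG
  set L : (Fin n → ℝ) → ((Fin n → ℝ) →L[ℝ] (Fin n → ℝ)) := fun z =>
    ContinuousLinearMap.id ℝ _ - (A : (Fin n → ℝ) →L[ℝ] (Fin n → ℝ)).comp (fderiv ℝ F z) with hL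
  have hGd : ∀ z, HasFDerivAt G (L z) z := fun z =>
    (hasFDerivAt_id z).sub
      ((A : (Fin n → ℝ) →L[ℝ] (Fin n → ℝ)).hasFDerivAt.comp z (hd z).hasFDerivAt)
  have hK' : ∀ z ∈ Metric.closedBall x r, ∀ u : Fin n → ℝ, ‖u‖ ≤ 1 →
      ‖-A (F x) + r • L z u‖ ≤ ρ * r := fun z hz u hu => hK z hz u hu
  have hLu : ∀ z ∈ Metric.closedBall x r, ∀ u : Fin n → ℝ, ‖u‖ ≤ 1 → ‖L z u‖ ≤ ρ := by
    intro z hz u hu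
    have h1 := hK' z hz u hu
    have h2 := hK' z hz (-u) (by simpa using hu)
    have h3 := norm_sub_le (-A (F x) + r • L z u) (-A (F x) + r • L z (-u))
    have h4 : (-A (F x) + r • L z u) - (-A (F x) + r • L z (-u)) = (2 * r) • L z u := by
      rw [map_neg]; module
    rw [h4, norm_smul, Real.norm_of_nonneg (by positivity)] at h3
    have h5 : r * ‖L z u‖ ≤ r * ρ := by linarith
    exact le_of_mul_le_mul_left h5 hr
  have hLn : ∀ z ∈ Metric.closedBall x r, ‖L z‖ ≤ ρ := by
    intro z hz
    refine ContinuousLinearMap.opNorm_le_of_unit_norm hρ0.le ?_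
    intro u hu
    exact hLu z hz u hu.le
  have hlip : ∀ y ∈ Metric.closedBall x r, ∀ z ∈ Metric.closedBall x r,
      ‖G y - G z‖ ≤ ρ * ‖y - z‖ := fun y hy z hz =>
    Convex.norm_image_sub_le_of_norm_hasFDerivWithin_le
      (fun w _ => (hGd w).hasFDerivWithinAt) hLn (convex_closedBall x r) hz hy
  have hmap : ∀ y ∈ Metric.closedBall x r, ‖G y - x‖ ≤ ρ * r := by
    intro y hy
    have hy' : ‖y - x‖ ≤ r := by simpa [dist_eq_norm] using hy
    have hder : ∀ t : ℝ, HasDerivAt (fun t : ℝ => t • (-A (F x)) + G (x + t • (y - x)))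
        (-A (F x) + L (x + t • (y - x)) (y - x)) t := by
      intro t
      have h1 : HasDerivAt (fun t : ℝ => x + t • (y - x)) (y - x) t := by
        simpa using ((hasDerivAt_id t).smul_const (y - x)).const_add x
      have h2 : HasDerivAt (fun t : ℝ => t • (-A (F x))) (-A (F x)) t := by
        simpa using (hasDerivAt_id t).smul_const (-A (F x))
      exact h2.add ((hGd _).comp_hasDerivAt t h1)
    have hb := norm_image_sub_le_of_norm_deriv_le_segment_01' (C := ρ * r)
      (fun t _ => (hder t).hasDerivWithinAt) (by
        intro t ht
        have hz : x + t • (y - x) ∈ Metric.closedBall x r := by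
          rw [Metric.mem_closedBall, dist_eq_norm, add_sub_cancel_left, norm_smul,
            Real.norm_of_nonneg ht.1]
          nlinarith [ht.1, ht.2, norm_nonneg (y - x)]
        have hu : ‖r⁻¹ • (y - x)‖ ≤ 1 := by
          rw [norm_smul, norm_inv, Real.norm_of_nonneg hr.le, inv_mul_le_one₀ hr]
          exact hy'
        have := hK' _ hz _ hu
        rwa [map_smul, smul_inv_smul₀ hr.ne'] at this)
    have he : G y - x = ((1 : ℝ) • (-A (F x)) + G (x + (1 : ℝ) • (y - x)))
        - ((0 : ℝ) • (-A (F x)) + G (x + (0 : ℝ) • (y - x))) := by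
      simp [hG]
      abel
    rw [he]
    exact hb
  have hmaps : Set.MapsTo G (Metric.closedBall x r) (Metric.closedBall x r) := by
    intro y hy
    rw [Metric.mem_closedBall, dist_eq_norm]
    nlinarith [hmap y hy]
  have hc : ContractingWith ⟨ρ, hρ0.le⟩ (hmaps.restrict G _ _) := by
    refine ⟨hρ1, LipschitzWith.of_dist_le_mul ?_⟩
    rintro ⟨y, hy⟩ ⟨z, hz⟩
    rw [Subtype.dist_eq, Subtype.dist_eq, dist_eq_norm, dist_eq_norm]
    exact hlip y hy z hz
  obtain ⟨xs, hxs, hfix, -⟩ := hc.exists_fixedPoint' Metric.isClosed_closedBall.isComplete hmaps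
    (Metric.mem_closedBall_self hr.le) (edist_ne_top _ _)
  have hfix' : G xs = xs := hfix
  refine ⟨xs, hxs, ?_, ?_, ?_⟩
  · have : A (F xs) = 0 := by simpa [hG] using hfix'
    simpa using this
  · have := hmap xs hxs
    rwa [hfix', norm_sub_rev] at this
  · intro y hy hy0
    have h1 := hlip y hy xs hxs
    have hGy : G y = y := by simp [hG, hy0]
    rw [hGy, hfix'] at h1
    have h2 : ‖y - xs‖ ≤ 0 := by nlinarith [norm_nonneg (y - xs)]
    exact sub_eq_zero.1 (norm_le_zero_iff.1 h2)
end

section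
/- Let n ≥ 1, let F : ℝⁿ → ℝⁿ be continuously differentiable, let A : ℝⁿ → ℝⁿ be a linear map, let ρ ∈ (0,1), x ∈ ℝⁿ and r > 0, and suppose the Krawczyk condition holds at x with radius r for A and ρ. Then the quasi-Newton map g(y) = y − A(F(y)) maps the closed box B(x,r) into the closed box B(x, ρ·r); that is, ‖g(y) − x‖ ≤ ρ·r for every y ∈ B(x,r). -/
/-- Under the Krawczyk condition, the quasi-Newton map `g(y) = y − A(F(y))`
maps the closed box `B(x,r)` into the closed box `B(x, ρ·r)`. -/
theorem quasiNewton_maps_ball_into_smaller_ball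
    (n : ℕ) (hn : 1 ≤ n)
    (F : (Fin n → ℝ) → (Fin n → ℝ)) (hF : ContDiff ℝ 1 F)
    (A : (Fin n → ℝ) →L[ℝ] (Fin n → ℝ))
    (ρ : ℝ) (hρ : ρ ∈ Set.Ioo (0 : ℝ) 1)
    (x : Fin n → ℝ) (r : ℝ) (hr : 0 < r)
    (hK : ∀ z ∈ Metric.closedBall x r, ∀ u : Fin n → ℝ, ‖u‖ ≤ 1 →
      ‖-A (F x) + r • (u - A ((fderiv ℝ F z) u))‖ ≤ ρ * r) :
    ∀ y ∈ Metric.closedBall x r, ‖(y - A (F y)) - x‖ ≤ ρ * r := by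
  intro y hy
  have hy' : ‖y - x‖ ≤ r := by simpa [dist_eq_norm] using hy
  have hu : ‖r⁻¹ • (y - x)‖ ≤ 1 := by
    rw [norm_smul, norm_inv, Real.norm_of_nonneg hr.le, inv_mul_le_iff₀ hr]
    simpa using hy'
  have hd : ∀ t : ℝ, HasDerivAt
      (fun t : ℝ => (x + t • (y - x)) - A (F (x + t • (y - x))) - t • A (F x))
      ((y - x) - A (fderiv ℝ F (x + t • (y - x)) (y - x)) - A (F x)) t := by
    intro t
    have h1 : HasDerivAt (fun t : ℝ => x + t • (y - x)) (y - x) t := by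
      simpa using ((hasDerivAt_id t).smul_const (y - x)).const_add x
    have h2 : HasDerivAt (fun t : ℝ => F (x + t • (y - x)))
        (fderiv ℝ F (x + t • (y - x)) (y - x)) t :=
      ((hF.differentiable (by simp)) _).hasFDerivAt.comp_hasDerivAt t h1
    have h3 : HasDerivAt (fun t : ℝ => A (F (x + t • (y - x))))
        (A (fderiv ℝ F (x + t • (y - x)) (y - x))) t :=
      A.hasFDerivAt.comp_hasDerivAt t h2
    have h4 : HasDerivAt (fun t : ℝ => t • A (F x)) (A (F x)) t := by
      simpa using (hasDerivAt_id t).smul_const (A (F x))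
    exact (h1.sub h3).sub h4
  have key := norm_image_sub_le_of_norm_deriv_le_segment_01' (C := ρ * r)
    (fun t _ => (hd t).hasDerivWithinAt) (by
      intro t ht
      have hz : x + t • (y - x) ∈ Metric.closedBall x r := by
        rw [Metric.mem_closedBall, dist_eq_norm, add_sub_cancel_left, norm_smul,
          Real.norm_of_nonneg ht.1]
        nlinarith [norm_nonneg (y - x), ht.1, ht.2]
      have h := hK _ hz _ hu
      rw [map_smul, map_smul, ← smul_sub, smul_inv_smul₀ hr.ne'] at h
      refine le_of_eq_of_le (congrArg norm ?_) h
      abel)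
  refine le_of_eq_of_le (congrArg norm ?_) key
  simp only [one_smul, zero_smul, add_sub_cancel, add_zero, sub_zero]
  abel
end

section
/- Let n ≥ 1, let F : ℝⁿ → ℝⁿ be continuously differentiable, let A : ℝⁿ → ℝⁿ be an invertible linear map, let ρ ∈ (0,1), x ∈ ℝⁿ and r > 0, and suppose the Krawczyk condition holds at x with radius r for A and ρ. Let x* be the unique zero of F in B(x,r). Then for any starting point y₀ ∈ B(x,r), the quasi-Newton iterates defined by y_{k+1} = y_k − A(F(y_k)) remain in B(x,r) for all k and satisfy ‖y_k − x*‖ ≤ ρᵏ·‖y₀ − x*‖ for all k; in particular the sequence (y_k) converges to x*. -/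
/-- Under the Krawczyk condition with invertible `A`, the quasi-Newton iteration
`y_{k+1} = y_k − A(F(y_k))` starting anywhere in `B(x,r)` stays in `B(x,r)`,
converges to the unique zero `x*` of `F` in `B(x,r)`, and satisfies
`‖y_k − x*‖ ≤ ρᵏ·‖y₀ − x*‖`. -/
theorem quasiNewton_iterates_converge
    (n : ℕ) (hn : 1 ≤ n)
    (F : (Fin n → ℝ) → (Fin n → ℝ)) (hF : ContDiff ℝ 1 F)
    (A : (Fin n → ℝ) ≃L[ℝ] (Fin n → ℝ))
    (ρ : ℝ) (hρ : ρ ∈ Set.Ioo (0 : ℝ) 1)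
    (x : Fin n → ℝ) (r : ℝ) (hr : 0 < r)
    (hK : ∀ z ∈ Metric.closedBall x r, ∀ u : Fin n → ℝ, ‖u‖ ≤ 1 →
      ‖-A (F x) + r • (u - A ((fderiv ℝ F z) u))‖ ≤ ρ * r)
    (xs : Fin n → ℝ) (hxs : xs ∈ Metric.closedBall x r) (hFxs : F xs = 0)
    (hxs_unique : ∀ y ∈ Metric.closedBall x r, F y = 0 → y = xs)
    (y : ℕ → (Fin n → ℝ))
    (hy0 : y 0 ∈ Metric.closedBall x r)
    (hy : ∀ k : ℕ, y (k + 1) = y k - A (F (y k))) :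
    (∀ k : ℕ, y k ∈ Metric.closedBall x r ∧ ‖y k - xs‖ ≤ ρ ^ k * ‖y 0 - xs‖) ∧
    Filter.Tendsto y Filter.atTop (nhds xs) := by
  obtain ⟨hρ0, hρ1⟩ := hρ
  have hd : ∀ z, HasFDerivAt F (fderiv ℝ F z) z := fun z =>
    ((hF.differentiable (by norm_num)) z).hasFDerivAt
  let g : (Fin n → ℝ) → (Fin n → ℝ) := fun z => z - A (F z)
  let L : (Fin n → ℝ) → ((Fin n → ℝ) →L[ℝ] (Fin n → ℝ)) := fun z =>
    ContinuousLinearMap.id ℝ _ - (A : (Fin n → ℝ) →L[ℝ] (Fin n → ℝ)).comp (fderiv ℝ F z)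
  have hg : ∀ z, HasFDerivAt g (L z) z := fun z =>
    (hasFDerivAt_id z).sub
      ((A : (Fin n → ℝ) →L[ℝ] (Fin n → ℝ)).hasFDerivAt.comp z (hd z))
  have hK' : ∀ z ∈ Metric.closedBall x r, ∀ u : Fin n → ℝ, ‖u‖ ≤ 1 →
      ‖-A (F x) + r • L z u‖ ≤ ρ * r := hK
  have hL1 : ∀ z ∈ Metric.closedBall x r, ∀ u : Fin n → ℝ, ‖u‖ ≤ 1 → ‖L z u‖ ≤ ρ := by
    intro z hz u hu
    have h1 := hK' z hz u hu
    have h2 := hK' z hz (-u) (by simpa using hu)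
    have h3 := norm_sub_le (-A (F x) + r • L z u) (-A (F x) + r • L z (-u))
    have h4 : (-A (F x) + r • L z u) - (-A (F x) + r • L z (-u)) = (2 * r) • L z u := by
      rw [map_neg]; module
    rw [h4, norm_smul, Real.norm_of_nonneg (by positivity)] at h3
    have h5 : r * ‖L z u‖ ≤ r * ρ := by linarith
    exact le_of_mul_le_mul_left h5 hr
  have hL : ∀ z ∈ Metric.closedBall x r, ‖L z‖ ≤ ρ := by
    intro z hz
    refine ContinuousLinearMap.opNorm_le_of_unit_norm hρ0.le ?_
    intro u hu
    exact hL1 z hz u hu.le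
  have hcontr : ∀ z ∈ Metric.closedBall x r, ‖g z - xs‖ ≤ ρ * ‖z - xs‖ := by
    intro z hz
    have h := (convex_closedBall x r).norm_image_sub_le_of_norm_hasFDerivWithin_le
      (fun w _ => (hg w).hasFDerivWithinAt) hL hxs hz
    have e : g xs = xs := by simp [g, hFxs]
    rwa [e] at h
  have hstay : ∀ z ∈ Metric.closedBall x r, g z ∈ Metric.closedBall x r := by
    intro z hz
    have hzr : ‖z - x‖ ≤ r := by simpa [dist_eq_norm] using hz
    let φ : ℝ → (Fin n → ℝ) := fun t => g (x + t • (z - x)) - t • A (F x)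
    have hφ : ∀ t ∈ Set.Icc (0 : ℝ) 1, HasDerivWithinAt φ
        (L (x + t • (z - x)) (z - x) - A (F x)) (Set.Icc 0 1) t := by
      intro t _
      have h1 : HasDerivAt (fun t : ℝ => x + t • (z - x)) (z - x) t := by
        simpa using ((hasDerivAt_id t).smul_const (z - x)).const_add x
      have h2 : HasDerivAt (fun t : ℝ => t • A (F x)) (A (F x)) t := by
        simpa using (hasDerivAt_id t).smul_const (A (F x))
      exact (((hg _).comp_hasDerivAt t h1).sub h2).hasDerivWithinAt
    have hb : ∀ t ∈ Set.Ico (0 : ℝ) 1,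
        ‖L (x + t • (z - x)) (z - x) - A (F x)‖ ≤ ρ * r := by
      intro t ht
      have hm : x + t • (z - x) ∈ Metric.closedBall x r := by
        rw [Metric.mem_closedBall, dist_eq_norm, add_sub_cancel_left, norm_smul,
          Real.norm_of_nonneg ht.1]
        nlinarith [ht.1, ht.2, norm_nonneg (z - x)]
      have h := hK' _ hm (r⁻¹ • (z - x)) (by
        rw [norm_smul, norm_inv, Real.norm_of_nonneg hr.le, inv_mul_le_iff₀ hr]
        linarith)
      rw [map_smul, smul_inv_smul₀ hr.ne'] at h
      rwa [sub_eq_neg_add]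
    have h := norm_image_sub_le_of_norm_deriv_le_segment_01' hφ hb
    have e : φ 1 - φ 0 = g z - x := by
      simp [φ, g]
    rw [e] at h
    rw [Metric.mem_closedBall, dist_eq_norm]
    nlinarith
  have main : ∀ k : ℕ, y k ∈ Metric.closedBall x r ∧ ‖y k - xs‖ ≤ ρ ^ k * ‖y 0 - xs‖ := by
    intro k
    induction k with
    | zero => exact ⟨hy0, by simp⟩
    | succ k ih =>
      have e : y (k + 1) = g (y k) := hy k
      rw [e]
      refine ⟨hstay _ ih.1, (hcontr _ ih.1).trans ?_⟩
      rw [pow_succ', mul_assoc]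
      exact mul_le_mul_of_nonneg_left ih.2 hρ0.le
  refine ⟨main, ?_⟩
  rw [tendsto_iff_norm_sub_tendsto_zero]
  refine squeeze_zero (fun _ => norm_nonneg _) (fun k => (main k).2) ?_
  simpa using (tendsto_pow_atTop_nhds_zero_of_lt_one hρ0.le hρ1).mul_const ‖y 0 - xs‖
end

section
/- Let n ≥ 1, let F : ℝⁿ → ℝⁿ be continuously differentiable, let A : ℝⁿ → ℝⁿ be a linear map, let ρ ∈ (0,1), x ∈ ℝⁿ and r > 0, and suppose the Krawczyk condition holds at x with radius r for A and ρ. If y₁, y₂ ∈ B(x,r) satisfy F(y₁) = 0 and F(y₂) = 0, then y₁ = y₂. -/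
/-- Under the Krawczyk condition, `F` has at most one zero in the closed box `B(x,r)`. -/
theorem krawczyk_unique_zero
    (n : ℕ) (hn : 1 ≤ n)
    (F : (Fin n → ℝ) → (Fin n → ℝ)) (hF : ContDiff ℝ 1 F)
    (A : (Fin n → ℝ) →L[ℝ] (Fin n → ℝ))
    (ρ : ℝ) (hρ : ρ ∈ Set.Ioo (0 : ℝ) 1)
    (x : Fin n → ℝ) (r : ℝ) (hr : 0 < r)
    (hK : ∀ z ∈ Metric.closedBall x r, ∀ u : Fin n → ℝ, ‖u‖ ≤ 1 →
      ‖-A (F x) + r • (u - A ((fderiv ℝ F z) u))‖ ≤ ρ * r)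
    (y₁ y₂ : Fin n → ℝ)
    (hy₁ : y₁ ∈ Metric.closedBall x r) (hy₂ : y₂ ∈ Metric.closedBall x r)
    (hFy₁ : F y₁ = 0) (hFy₂ : F y₂ = 0) :
    y₁ = y₂ := by
  have hd : Differentiable ℝ F := hF.differentiable (by norm_num)
  have hder : ∀ z ∈ Metric.closedBall x r,
      HasFDerivWithinAt (fun y => y - A (F y))
        (ContinuousLinearMap.id ℝ (Fin n → ℝ) - A.comp (fderiv ℝ F z))
        (Metric.closedBall x r) z := by
    intro z _
    exact ((hasFDerivAt_id z).sub
      (A.hasFDerivAt.comp z (hd z).hasFDerivAt)).hasFDerivWithinAt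
  have hbound : ∀ z ∈ Metric.closedBall x r,
      ‖ContinuousLinearMap.id ℝ (Fin n → ℝ) - A.comp (fderiv ℝ F z)‖ ≤ ρ := by
    intro z hz
    refine ContinuousLinearMap.opNorm_le_of_unit_norm hρ.1.le ?_
    intro u hu
    have h1 := hK z hz u hu.le
    have h2 := hK z hz (-u) (by rw [norm_neg]; exact hu.le)
    have h3 := norm_sub_le (-A (F x) + r • (u - A ((fderiv ℝ F z) u)))
      (-A (F x) + r • (-u - A ((fderiv ℝ F z) (-u))))
    have h4 : (-A (F x) + r • (u - A ((fderiv ℝ F z) u))) -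
        (-A (F x) + r • (-u - A ((fderiv ℝ F z) (-u)))) =
        (2 * r) • (u - A ((fderiv ℝ F z) u)) := by
      simp only [map_neg]
      module
    rw [h4, norm_smul, Real.norm_of_nonneg (by positivity)] at h3
    change ‖u - A ((fderiv ℝ F z) u)‖ ≤ ρ
    have h5 : (2 * r) * ‖u - A ((fderiv ℝ F z) u)‖ ≤ (2 * r) * ρ := by linarith
    exact le_of_mul_le_mul_left h5 (by positivity)
  have hmv := (convex_closedBall x r).norm_image_sub_le_of_norm_hasFDerivWithin_le
    hder hbound hy₂ hy₁
  simp only [hFy₁, hFy₂, map_zero, sub_zero] at hmv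
  have h0 : ‖y₁ - y₂‖ ≤ 0 := by
    have := hρ.2
    have := norm_nonneg (y₁ - y₂)
    nlinarith
  exact sub_eq_zero.mp (norm_le_zero_iff.mp h0)
end

section
/- Let n ≥ 1, let F : ℝⁿ × ℝ → ℝⁿ be continuously differentiable, and write D₁F(z,a) : ℝⁿ → ℝⁿ for the partial derivative of F in its first argument at (z,a). Let A : ℝⁿ → ℝⁿ be an invertible linear map, ρ ∈ (0,1), x ∈ ℝⁿ, a₀ ∈ ℝ, and r, s > 0. Suppose that for every a ∈ [a₀ − s, a₀ + s], every z ∈ B(x,r) and every u ∈ ℝⁿ with ‖u‖ ≤ 1, one has ‖−A(F(x,a)) + r·(u − A(D₁F(z,a)(u)))‖ ≤ ρ·r. Then for every a ∈ [a₀ − s, a₀ + s] there exists a unique point ξ(a) ∈ B(x,r) with F(ξ(a), a) = 0, and moreover ‖x − ξ(a)‖ ≤ ρ·r. -/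
/-- **Parametric Krawczyk theorem.** If the Krawczyk condition (in the first
variable) holds uniformly over `a ∈ [a₀ − s, a₀ + s]`, then for each such `a`
there is a unique point `ξ(a) ∈ B(x,r)` with `F(ξ(a), a) = 0`, and it satisfies
`‖x − ξ(a)‖ ≤ ρ·r`. -/
theorem krawczyk_parametric_exists_unique
    (n : ℕ) (hn : 1 ≤ n)
    (F : (Fin n → ℝ) × ℝ → (Fin n → ℝ)) (hF : ContDiff ℝ 1 F)
    (A : (Fin n → ℝ) ≃L[ℝ] (Fin n → ℝ))
    (ρ : ℝ) (hρ : ρ ∈ Set.Ioo (0 : ℝ) 1)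
    (x : Fin n → ℝ) (a₀ : ℝ) (r s : ℝ) (hr : 0 < r) (hs : 0 < s)
    (hK : ∀ a ∈ Set.Icc (a₀ - s) (a₀ + s), ∀ z ∈ Metric.closedBall x r,
      ∀ u : Fin n → ℝ, ‖u‖ ≤ 1 →
      ‖-A (F (x, a)) + r • (u - A ((fderiv ℝ F (z, a)) (u, 0)))‖ ≤ ρ * r) :
    ∀ a ∈ Set.Icc (a₀ - s) (a₀ + s),
      ∃ ξ ∈ Metric.closedBall x r,
        F (ξ, a) = 0 ∧ ‖x - ξ‖ ≤ ρ * r ∧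
        ∀ y ∈ Metric.closedBall x r, F (y, a) = 0 → y = ξ := by
  intro a ha
  obtain ⟨hρ0, hρ1⟩ := hρ
  have hK := hK a ha
  set g : (Fin n → ℝ) → (Fin n → ℝ) := fun z => z - A (F (z, a)) with hg
  set B := Metric.closedBall x r with hB
  set M : (Fin n → ℝ) → ((Fin n → ℝ) →L[ℝ] (Fin n → ℝ)) := fun z =>
    ContinuousLinearMap.id ℝ _ - (A : (Fin n → ℝ) →L[ℝ] (Fin n → ℝ)).comp
      ((fderiv ℝ F (z, a)).comp (ContinuousLinearMap.inl ℝ _ ℝ)) with hM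
  have hMa : ∀ z u, M z u = u - A ((fderiv ℝ F (z, a)) (u, 0)) := by
    intro z u
    simp [hM]
  have hgd : ∀ z, HasFDerivAt g (M z) z := by
    intro z
    have h1 : HasFDerivAt F (fderiv ℝ F (z, a)) (z, a) :=
      (hF.differentiable (by norm_num) (z, a)).hasFDerivAt
    have h2 : HasFDerivAt (fun z : Fin n → ℝ => (z, a))
        (ContinuousLinearMap.inl ℝ (Fin n → ℝ) ℝ) z := hasFDerivAt_prodMk_left z a
    have h3 := h1.comp z h2
    have h4 := (A : (Fin n → ℝ) →L[ℝ] (Fin n → ℝ)).hasFDerivAt.comp z h3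
    exact (hasFDerivAt_id z).sub h4
  have hMle : ∀ z ∈ B, ‖M z‖ ≤ ρ := by
    intro z hz
    refine ContinuousLinearMap.opNorm_le_of_unit_norm hρ0.le ?_
    intro u hu
    have h1 := hK z hz u hu.le
    have h2 := hK z hz (-u) (by rw [norm_neg]; exact hu.le)
    rw [← hMa] at h1 h2
    rw [map_neg] at h2
    have h3 := norm_sub_le (-A (F (x, a)) + r • M z u) (-A (F (x, a)) + r • -(M z u))
    have h4 : (-A (F (x, a)) + r • M z u) - (-A (F (x, a)) + r • -(M z u))
        = (2 * r) • M z u := by module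
    rw [h4, norm_smul, Real.norm_of_nonneg (by positivity)] at h3
    have : r * ‖M z u‖ ≤ r * ρ := by linarith
    exact le_of_mul_le_mul_left this hr
  have hconv : Convex ℝ B := convex_closedBall x r
  have hlip : ∀ y ∈ B, ∀ z ∈ B, ‖g z - g y‖ ≤ ρ * ‖z - y‖ := by
    intro y hy z hz
    exact hconv.norm_image_sub_le_of_norm_hasFDerivWithin_le
      (fun w _ => (hgd w).hasFDerivWithinAt) hMle hy hz
  have hxB : x ∈ B := Metric.mem_closedBall_self hr.le
  have hmap : ∀ y ∈ B, ‖g y - x‖ ≤ ρ * r := by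
    intro y hy
    have hd : ∀ t ∈ Set.Icc (0 : ℝ) 1, HasDerivWithinAt
        (fun t : ℝ => g (x + t • (y - x)) - t • A (F (x, a)))
        (M (x + t • (y - x)) (y - x) - A (F (x, a))) (Set.Icc 0 1) t := by
      intro t _
      have e1 : HasDerivAt (fun t : ℝ => x + t • (y - x)) (y - x) t := by
        simpa using ((hasDerivAt_id t).smul_const (y - x)).const_add x
      have e2 : HasDerivAt (fun t : ℝ => t • A (F (x, a))) (A (F (x, a))) t := by
        simpa using (hasDerivAt_id t).smul_const (A (F (x, a)))
      exact (((hgd _).comp_hasDerivAt t e1).sub e2).hasDerivWithinAt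
    have := norm_image_sub_le_of_norm_deriv_le_segment_01' hd (C := ρ * r) (by
      intro t ht
      have hz : x + t • (y - x) ∈ B :=
        hconv.add_smul_sub_mem hxB hy ⟨ht.1, ht.2.le⟩
      have hu : ‖r⁻¹ • (y - x)‖ ≤ 1 := by
        rw [norm_smul, Real.norm_of_nonneg (by positivity), inv_mul_le_one₀ hr]
        exact mem_closedBall_iff_norm.1 hy
      have h1 := hK _ hz _ hu
      rw [← hMa, map_smul, smul_smul, mul_inv_cancel₀ hr.ne', one_smul] at h1
      rwa [sub_eq_neg_add])
    have e : g (x + (1:ℝ) • (y - x)) - (1:ℝ) • A (F (x, a)) -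
        (g (x + (0:ℝ) • (y - x)) - (0:ℝ) • A (F (x, a))) = g y - x := by
      simp [hg]
    simpa only [e] using this
  have hρr : ρ * r ≤ r := by nlinarith
  have hmaps : Set.MapsTo g B B := fun y hy =>
    mem_closedBall_iff_norm.2 ((hmap y hy).trans hρr)
  have hcontr : ContractingWith ⟨ρ, hρ0.le⟩ (hmaps.restrict g B B) := by
    refine ⟨by exact_mod_cast hρ1, LipschitzWith.of_dist_le_mul ?_⟩
    intro y z
    have := hlip z z.2 y y.2
    rw [← dist_eq_norm, ← dist_eq_norm] at this
    exact this
  obtain ⟨ξ, hξB, hfix, -⟩ := hcontr.exists_fixedPoint' Metric.isClosed_closedBall.isComplete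
    hmaps hxB (edist_ne_top _ _)
  have hfix : g ξ = ξ := hfix
  refine ⟨ξ, hξB, ?_, ?_, ?_⟩
  · have : A (F (ξ, a)) = 0 := by simpa [hg] using hfix
    simpa using this
  · have := hmap ξ hξB
    rwa [hfix, norm_sub_rev] at this
  · intro y hy hy0
    have hgy : g y = y := by simp [hg, hy0]
    have := hlip ξ hξB y hy
    rw [hgy, hfix] at this
    have h0 : ‖y - ξ‖ = 0 := by nlinarith [norm_nonneg (y - ξ)]
    exact sub_eq_zero.1 (norm_eq_zero.1 h0)
end

section
/- Let n ≥ 1, let F : ℝⁿ × ℝ → ℝⁿ be continuously differentiable, and write D₁F(z,a) : ℝⁿ → ℝⁿ for the partial derivative of F in its first argument at (z,a). Let A : ℝⁿ → ℝⁿ be an invertible linear map, ρ ∈ (0,1), x ∈ ℝⁿ, a₀ ∈ ℝ, and r, s > 0. Suppose that for every a ∈ [a₀ − s, a₀ + s], every z ∈ B(x,r) and every u ∈ ℝⁿ with ‖u‖ ≤ 1, one has ‖−A(F(x,a)) + r·(u − A(D₁F(z,a)(u)))‖ ≤ ρ·r, and for each a ∈ [a₀ − s, a₀ + s] let ξ(a)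 denote the unique point of B(x,r) with F(ξ(a), a) = 0. Then the map a ↦ ξ(a) is continuous on [a₀ − s, a₀ + s]. -/
/-- **Continuity of the implicitly defined solution.** Under the uniform
parametric Krawczyk condition over `[a₀ − s, a₀ + s]`, if `ξ(a)` denotes the
unique zero of `F(·, a)` in `B(x,r)`, then `a ↦ ξ(a)` is continuous on
`[a₀ − s, a₀ + s]`. -/
theorem krawczyk_parametric_solution_continuous
    (n : ℕ) (hn : 1 ≤ n)
    (F : (Fin n → ℝ) × ℝ → (Fin n → ℝ)) (hF : ContDiff ℝ 1 F)
    (A : (Fin n → ℝ) ≃L[ℝ] (Fin n → ℝ))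
    (ρ : ℝ) (hρ : ρ ∈ Set.Ioo (0 : ℝ) 1)
    (x : Fin n → ℝ) (a₀ : ℝ) (r s : ℝ) (hr : 0 < r) (hs : 0 < s)
    (hK : ∀ a ∈ Set.Icc (a₀ - s) (a₀ + s), ∀ z ∈ Metric.closedBall x r,
      ∀ u : Fin n → ℝ, ‖u‖ ≤ 1 →
      ‖-A (F (x, a)) + r • (u - A ((fderiv ℝ F (z, a)) (u, 0)))‖ ≤ ρ * r)
    (ξ : ℝ → (Fin n → ℝ))
    (hξ : ∀ a ∈ Set.Icc (a₀ - s) (a₀ + s),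
      ξ a ∈ Metric.closedBall x r ∧ F (ξ a, a) = 0) :
    ContinuousOn ξ (Set.Icc (a₀ - s) (a₀ + s)) := by
  obtain ⟨hρ0, hρ1⟩ := hρ
  -- derivative bound
  have hD : ∀ a ∈ Set.Icc (a₀ - s) (a₀ + s), ∀ z ∈ Metric.closedBall x r,
      ‖ContinuousLinearMap.id ℝ (Fin n → ℝ) - (A : (Fin n → ℝ) →L[ℝ] (Fin n → ℝ)).comp
        ((fderiv ℝ F (z, a)).comp (ContinuousLinearMap.inl ℝ (Fin n → ℝ) ℝ))‖ ≤ ρ := by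
    intro a ha z hz
    refine ContinuousLinearMap.opNorm_le_of_unit_norm hρ0.le ?_
    intro u hu
    set L := ContinuousLinearMap.id ℝ (Fin n → ℝ) - (A : (Fin n → ℝ) →L[ℝ] (Fin n → ℝ)).comp
        ((fderiv ℝ F (z, a)).comp (ContinuousLinearMap.inl ℝ (Fin n → ℝ) ℝ)) with hL
    have hLe : ∀ v, v - A ((fderiv ℝ F (z, a)) (v, 0)) = L v := by
      intro v
      simp [hL]
    have h1 := hK a ha z hz u hu.le
    have h2 := hK a ha z hz (-u) (by rw [norm_neg]; exact hu.le)
    rw [hLe] at h1 h2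
    rw [map_neg] at h2
    have h3 := norm_sub_le (-A (F (x, a)) + r • L u) (-A (F (x, a)) + r • -L u)
    have h4 : (-A (F (x, a)) + r • L u) - (-A (F (x, a)) + r • -L u) = (2 * r) • L u := by
      module
    rw [h4, norm_smul, Real.norm_of_nonneg (by positivity)] at h3
    nlinarith
  have hG : ∀ a ∈ Set.Icc (a₀ - s) (a₀ + s), ∀ y ∈ Metric.closedBall x r,
      ∀ z ∈ Metric.closedBall x r,
      ‖(z - A (F (z, a))) - (y - A (F (y, a)))‖ ≤ ρ * ‖z - y‖ := by
    intro a ha y hy z hz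
    refine (convex_closedBall x r).norm_image_sub_le_of_norm_hasFDerivWithin_le
      (f := fun z => z - A (F (z, a))) ?_ (hD a ha) hy hz
    intro w _
    have h1 : HasFDerivAt F (fderiv ℝ F (w, a)) (w, a) :=
      (hF.differentiable (by norm_num) (w, a)).hasFDerivAt
    have h2 := HasFDerivAt.comp (f := fun e => (e, a)) w h1 (hasFDerivAt_prodMk_left (𝕜 := ℝ) w a)
    exact ((hasFDerivAt_id w).sub (A.hasFDerivAt.comp w h2)).hasFDerivWithinAt
  intro a ha
  have hb : ∀ b ∈ Set.Icc (a₀ - s) (a₀ + s),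
      dist (ξ b) (ξ a) ≤ (1 - ρ)⁻¹ * ‖A (F (ξ a, b))‖ := by
    intro b hb
    have h := hG b hb (ξ a) (hξ a ha).1 (ξ b) (hξ b hb).1
    rw [(hξ b hb).2, map_zero, sub_zero] at h
    have h2 := norm_sub_le (ξ b - (ξ a - A (F (ξ a, b)))) (A (F (ξ a, b)))
    have h3 : ξ b - (ξ a - A (F (ξ a, b))) - A (F (ξ a, b)) = ξ b - ξ a := by abel
    rw [h3] at h2
    rw [dist_eq_norm, inv_mul_eq_div, le_div_iff₀ (by linarith)]
    linarith
  have hc : Continuous fun b => (1 - ρ)⁻¹ * ‖A (F (ξ a, b))‖ := by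
    have := hF.continuous
    fun_prop
  have ht := hc.tendsto a
  simp only [(hξ a ha).2, map_zero, norm_zero, mul_zero] at ht
  refine tendsto_iff_dist_tendsto_zero.2 ?_
  refine squeeze_zero' (Filter.Eventually.of_forall fun _ => dist_nonneg) ?_
    (ht.mono_left nhdsWithin_le_nhds)
  filter_upwards [self_mem_nhdsWithin] with b hb'
  exact hb b hb'
end

section
/- Let n ≥ 1, let F : ℝⁿ → ℝⁿ be continuously differentiable, and let x* ∈ ℝⁿ satisfy F(x*) = 0 with DF(x*) invertible; set A = DF(x*)⁻¹. Then for every ρ ∈ (0,1) there exist r > 0 and δ > 0 such that for every x ∈ ℝⁿ with ‖x − x*‖ ≤ δ, the Krawczyk condition holds at x with radius r for A and ρ; in particular, the Krawczyk condition holds at x* itself with radius r for A and ρ. -/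
/-- Near a nonsingular zero `x*` of `F`, with `A = DF(x*)⁻¹`, the Krawczyk
condition holds: for every `ρ ∈ (0,1)` there are `r > 0` and `δ > 0` such that
the condition holds at every `x` with `‖x − x*‖ ≤ δ` with radius `r`; in
particular it holds at `x*` itself. -/
theorem krawczyk_condition_holds_near_nonsingular_zero
    (n : ℕ) (hn : 1 ≤ n)
    (F : (Fin n → ℝ) → (Fin n → ℝ)) (hF : ContDiff ℝ 1 F)
    (xs : Fin n → ℝ) (hFxs : F xs = 0)
    (A : (Fin n → ℝ) →L[ℝ] (Fin n → ℝ))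
    (hA₁ : ∀ u : Fin n → ℝ, A ((fderiv ℝ F xs) u) = u)
    (hA₂ : ∀ u : Fin n → ℝ, (fderiv ℝ F xs) (A u) = u) :
    ∀ ρ ∈ Set.Ioo (0 : ℝ) 1, ∃ r > (0 : ℝ), ∃ δ > (0 : ℝ),
      (∀ x : Fin n → ℝ, ‖x - xs‖ ≤ δ →
        ∀ z ∈ Metric.closedBall x r, ∀ u : Fin n → ℝ, ‖u‖ ≤ 1 →
          ‖-A (F x) + r • (u - A ((fderiv ℝ F z) u))‖ ≤ ρ * r) ∧
      (∀ z ∈ Metric.closedBall xs r, ∀ u : Fin n → ℝ, ‖u‖ ≤ 1 →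
        ‖-A (F xs) + r • (u - A ((fderiv ℝ F z) u))‖ ≤ ρ * r) := by
  intro ρ hρ
  obtain ⟨hρ0, hρ1⟩ := hρ
  have hcD : Continuous (fun z => fderiv ℝ F z) := hF.continuous_fderiv one_ne_zero
  have hcG : Continuous (fun z => ContinuousLinearMap.id ℝ (Fin n → ℝ) - A.comp (fderiv ℝ F z)) :=
    continuous_const.sub (continuous_const.clm_comp hcD)
  have hG0 : ContinuousLinearMap.id ℝ (Fin n → ℝ) - A.comp (fderiv ℝ F xs) = 0 := by
    apply ContinuousLinearMap.ext
    intro u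
    simp [hA₁]
  obtain ⟨ε, hε, hG⟩ := Metric.continuous_iff.1 hcG xs (ρ / 2) (by positivity)
  have hcA : Continuous (fun x => A (F x)) := A.continuous.comp hF.continuous
  obtain ⟨d, hd, hAF⟩ := Metric.continuous_iff.1 hcA xs (ρ * (ε / 3) / 2) (by positivity)
  have key : ∀ x : Fin n → ℝ, ‖x - xs‖ ≤ min (d / 2) (ε / 3) →
        ∀ z ∈ Metric.closedBall x (ε / 3), ∀ u : Fin n → ℝ, ‖u‖ ≤ 1 →
          ‖-A (F x) + (ε / 3) • (u - A ((fderiv ℝ F z) u))‖ ≤ ρ * (ε / 3) := by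
    intro x hx z hz u hu
    rw [← dist_eq_norm] at hx
    have h1 := hx.trans (min_le_left _ _)
    have h2 := hx.trans (min_le_right _ _)
    have h3 : dist z xs < ε := by
      have := dist_triangle z x xs
      have := Metric.mem_closedBall.1 hz
      linarith
    have h4 := hG z h3
    rw [hG0, dist_zero_right] at h4
    have h5 := hAF x (by linarith)
    rw [hFxs, map_zero, dist_zero_right] at h5
    have h6 : ‖u - A ((fderiv ℝ F z) u)‖ ≤ ρ / 2 * 1 :=
      ContinuousLinearMap.le_of_opNorm_le_of_le
        (ContinuousLinearMap.id ℝ (Fin n → ℝ) - A.comp (fderiv ℝ F z)) h4.le hu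
    calc _ ≤ ‖-A (F x)‖ + ‖(ε / 3) • (u - A ((fderiv ℝ F z) u))‖ := norm_add_le _ _
      _ = ‖A (F x)‖ + (ε / 3) * ‖u - A ((fderiv ℝ F z) u)‖ := by
        rw [norm_neg, norm_smul, Real.norm_of_nonneg (by positivity)]
      _ ≤ ρ * (ε / 3) / 2 + (ε / 3) * (ρ / 2 * 1) := by gcongr
      _ = ρ * (ε / 3) := by ring
  refine ⟨ε / 3, by positivity, min (d / 2) (ε / 3), by positivity, key, key xs ?_⟩
  rw [sub_self, norm_zero]
  positivity
end

section
/- Let γ₁, γ₂ : [0,1] → ℝ² be continuously differentiable curves, and let K₁, K₂ ⊆ ℝ² be closed convex cones such that γ₁'(t) ∈ K₁ and γ₂'(t) ∈ K₂ for every t ∈ [0,1]. Suppose that (K₁ ∪ (−K₁)) ∩ (K₂ ∪ (−K₂)) = {0}, i.e. no nonzero vector of K₁ is parallel to a vector of K₂. If s₁, s₂, t₁, t₂ ∈ [0,1] satisfy γ₁(s₁) = γ₂(t₁) and γ₁(s₂) = γ₂(t₂), then γ₁(s₁) = γ₁(s₂); in other words, the images of γ₁ and γ₂ share at most one point. -/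
open scoped Pointwise

theorem cone_increment_mem {γ γ' : ℝ → EuclideanSpace ℝ (Fin 2)}
    (hderiv : ∀ t ∈ Set.Icc (0 : ℝ) 1, HasDerivWithinAt γ (γ' t) (Set.Icc (0 : ℝ) 1) t)
    {K : Set (EuclideanSpace ℝ (Fin 2))} (hclosed : IsClosed K) (hconvex : Convex ℝ K)
    (hcone : ∀ c : ℝ, 0 ≤ c → ∀ w ∈ K, c • w ∈ K)
    (hmem : ∀ t ∈ Set.Icc (0 : ℝ) 1, γ' t ∈ K)
    {a b : ℝ} (ha : a ∈ Set.Icc (0 : ℝ) 1) (hb : b ∈ Set.Icc (0 : ℝ) 1) (hab : a ≤ b) :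
    γ b - γ a ∈ K := by
  rcases hab.eq_or_lt with rfl | hlt
  · have := hcone 0 le_rfl _ (hmem a ha)
    simpa using this
  have hpos : 0 < b - a := sub_pos.2 hlt
  have key : (b - a)⁻¹ • (γ b - γ a) ∈ K := by
    by_contra hx
    obtain ⟨f, u, hf, hu⟩ := geometric_hahn_banach_closed_point hconvex hclosed hx
    have hd : ∀ t ∈ Set.Icc (0 : ℝ) 1,
        HasDerivWithinAt (fun t => f (γ t)) (f (γ' t)) (Set.Icc (0 : ℝ) 1) t := fun t ht =>
      f.hasFDerivAt.comp_hasDerivWithinAt t (hderiv t ht)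
    obtain ⟨c, hc, hc'⟩ := exists_hasDerivAt_eq_slope (fun t => f (γ t)) (fun t => f (γ' t)) hlt
      (fun t ht => ((hd t ⟨ha.1.trans ht.1, ht.2.trans hb.2⟩).continuousWithinAt).mono
        (Set.Icc_subset_Icc ha.1 hb.2))
      (fun t ht => (hd t ⟨ha.1.trans ht.1.le, ht.2.le.trans hb.2⟩).hasDerivAt
        (Icc_mem_nhds (ha.1.trans_lt ht.1) (ht.2.trans_le hb.2)))
    have h1 := hf _ (hmem c ⟨ha.1.trans hc.1.le, hc.2.le.trans hb.2⟩)
    rw [map_smul, map_sub, smul_eq_mul, inv_mul_eq_div] at hu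
    linarith
  have := hcone (b - a) hpos.le _ key
  rwa [smul_inv_smul₀ hpos.ne'] at this

theorem cone_increment_mem_union {γ γ' : ℝ → EuclideanSpace ℝ (Fin 2)}
    (hderiv : ∀ t ∈ Set.Icc (0 : ℝ) 1, HasDerivWithinAt γ (γ' t) (Set.Icc (0 : ℝ) 1) t)
    {K : Set (EuclideanSpace ℝ (Fin 2))} (hclosed : IsClosed K) (hconvex : Convex ℝ K)
    (hcone : ∀ c : ℝ, 0 ≤ c → ∀ w ∈ K, c • w ∈ K)
    (hmem : ∀ t ∈ Set.Icc (0 : ℝ) 1, γ' t ∈ K)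
    {a b : ℝ} (ha : a ∈ Set.Icc (0 : ℝ) 1) (hb : b ∈ Set.Icc (0 : ℝ) 1) :
    γ b - γ a ∈ K ∪ -K := by
  rcases le_total a b with h | h
  · exact Or.inl (cone_increment_mem hderiv hclosed hconvex hcone hmem ha hb h)
  · right
    rw [Set.mem_neg, neg_sub]
    exact cone_increment_mem hderiv hclosed hconvex hcone hmem hb ha h

/-- If two C¹ planar curves have tangent vectors confined to closed convex
cones `K₁`, `K₂` with no nonzero parallel vectors in common
(`(K₁ ∪ −K₁) ∩ (K₂ ∪ −K₂) = {0}`), then their images meet in at most one point. -/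
theorem transverse_cones_at_most_one_intersection
    (γ₁ γ₂ γ₁' γ₂' : ℝ → EuclideanSpace ℝ (Fin 2))
    (hderiv₁ : ∀ t ∈ Set.Icc (0 : ℝ) 1,
      HasDerivWithinAt γ₁ (γ₁' t) (Set.Icc (0 : ℝ) 1) t)
    (hderiv₂ : ∀ t ∈ Set.Icc (0 : ℝ) 1,
      HasDerivWithinAt γ₂ (γ₂' t) (Set.Icc (0 : ℝ) 1) t)
    (hcont₁ : ContinuousOn γ₁' (Set.Icc (0 : ℝ) 1))
    (hcont₂ : ContinuousOn γ₂' (Set.Icc (0 : ℝ) 1))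
    (K₁ K₂ : Set (EuclideanSpace ℝ (Fin 2)))
    (hK₁closed : IsClosed K₁) (hK₁convex : Convex ℝ K₁)
    (hK₁cone : ∀ c : ℝ, 0 ≤ c → ∀ w ∈ K₁, c • w ∈ K₁)
    (hK₂closed : IsClosed K₂) (hK₂convex : Convex ℝ K₂)
    (hK₂cone : ∀ c : ℝ, 0 ≤ c → ∀ w ∈ K₂, c • w ∈ K₂)
    (hmem₁ : ∀ t ∈ Set.Icc (0 : ℝ) 1, γ₁' t ∈ K₁)
    (hmem₂ : ∀ t ∈ Set.Icc (0 : ℝ) 1, γ₂' t ∈ K₂)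
    (htrans : (K₁ ∪ -K₁) ∩ (K₂ ∪ -K₂) = {0})
    (s₁ s₂ t₁ t₂ : ℝ)
    (hs₁ : s₁ ∈ Set.Icc (0 : ℝ) 1) (hs₂ : s₂ ∈ Set.Icc (0 : ℝ) 1)
    (ht₁ : t₁ ∈ Set.Icc (0 : ℝ) 1) (ht₂ : t₂ ∈ Set.Icc (0 : ℝ) 1)
    (h₁ : γ₁ s₁ = γ₂ t₁) (h₂ : γ₁ s₂ = γ₂ t₂) :
    γ₁ s₁ = γ₁ s₂ := by
  have m₁ := cone_increment_mem_union hderiv₁ hK₁closed hK₁convex hK₁cone hmem₁ hs₂ hs₁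
  have m₂ := cone_increment_mem_union hderiv₂ hK₂closed hK₂convex hK₂cone hmem₂ ht₂ ht₁
  rw [← h₁, ← h₂] at m₂
  have h : γ₁ s₁ - γ₁ s₂ ∈ (K₁ ∪ -K₁) ∩ (K₂ ∪ -K₂) := ⟨m₁, m₂⟩
  rw [htrans] at h
  exact sub_eq_zero.1 h
end

section
/- Let γ₁, γ₂ : [0,1] → [0,1] × [0,1] be continuous paths in the closed unit square such that γ₁(0) lies on the left edge {0} × [0,1], γ₁(1) lies on the right edge {1} × [0,1], γ₂(0) lies on the bottom edge [0,1] × {0}, and γ₂(1) lies on the top edge [0,1] × {1}. Then there exist s, t ∈ [0,1] with γ₁(s) = γ₂(t); that is, the two paths must cross. -/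
/-- A continuous real function with nonnegative sine which starts in `[0, π]` stays there. -/
theorem stays_in_band (f : ℝ → ℝ) (hf : Continuous f) (hs : ∀ t, 0 ≤ Real.sin (f t))
    (a b : ℝ) (h0 : 0 ≤ f a) (h1 : f a ≤ Real.pi) : 0 ≤ f b ∧ f b ≤ Real.pi := by
  have hoc : (Set.range f).OrdConnected := (isPreconnected_range hf).ordConnected
  have hpi := Real.pi_pos
  constructor
  · by_contra! h
    obtain ⟨t, ht⟩ : max (f b) (-(Real.pi / 2)) ∈ Set.range f :=
      hoc.out ⟨b, rfl⟩ ⟨a, rfl⟩ ⟨le_max_left _ _, max_le (by linarith) (by linarith)⟩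
    have h2 := hs t
    have h3 : Real.sin (f t) < 0 := by
      rw [ht]
      apply Real.sin_neg_of_neg_of_neg_pi_lt
      · exact max_lt h (by linarith)
      · exact lt_of_lt_of_le (by linarith) (le_max_right _ _)
    linarith
  · by_contra! h
    obtain ⟨t, ht⟩ : min (f b) (Real.pi + Real.pi / 2) ∈ Set.range f :=
      hoc.out ⟨a, rfl⟩ ⟨b, rfl⟩ ⟨le_min (by linarith) (by linarith), min_le_left _ _⟩
    have h2 := hs t
    have h3 : Real.sin (f t - Real.pi) > 0 := by
      rw [ht]
      apply Real.sin_pos_of_pos_of_lt_pi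
      · have : Real.pi < min (f b) (Real.pi + Real.pi / 2) := lt_min h (by linarith)
        linarith
      · have := min_le_right (f b) (Real.pi + Real.pi / 2)
        linarith
    rw [Real.sin_sub_pi] at h3
    linarith

/-- A nonvanishing continuous planar function has a continuous logarithm. -/
theorem exists_continuous_log (F : ℝ × ℝ → ℂ) (hF : Continuous F) (h0 : ∀ p, F p ≠ 0) :
    ∃ L : ℝ × ℝ → ℂ, Continuous L ∧ ∀ p, Complex.exp (L p) = F p := by
  have : ContractibleSpace (ℝ × ℝ) := RealTopologicalVectorSpace.contractibleSpace
  obtain ⟨L, ⟨-, hL⟩, -⟩ := Complex.isCoveringMap_exp.existsUnique_continuousMap_lifts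
    (⟨fun p => ⟨F p, h0 p⟩, by fun_prop⟩ : C(ℝ × ℝ, {z : ℂ // z ≠ 0}))
    (a₀ := (0, 0)) (e₀ := Complex.log (F (0, 0)))
    (Subtype.ext (Complex.exp_log (h0 _)))
  exact ⟨L, L.continuous, fun p => congrArg Subtype.val (congrFun hL p)⟩

/-- An angle with nonpositive cosine and nonnegative sine is in `[π/2, π]` mod `2π`. -/
theorem exists_shift (x : ℝ) (hc : Real.cos x ≤ 0) (hs : 0 ≤ Real.sin x) :
    ∃ k : ℤ, Real.pi / 2 ≤ x - k * (2 * Real.pi) ∧ x - k * (2 * Real.pi) ≤ Real.pi := by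
  have hpi := Real.pi_pos
  obtain ⟨k, ⟨h1, h2⟩, -⟩ := existsUnique_sub_zsmul_mem_Ico (Real.two_pi_pos) x 0
  rw [zsmul_eq_mul] at h1 h2
  refine ⟨k, ?_, ?_⟩
  · by_contra! h
    have := Real.cos_pos_of_mem_Ioo (x := x - k * (2 * Real.pi)) ⟨by linarith, h⟩
    rw [Real.cos_sub_int_mul_two_pi] at this
    linarith
  · by_contra! h
    have := Real.sin_pos_of_pos_of_lt_pi (x := x - k * (2 * Real.pi) - Real.pi)
      (by linarith) (by linarith)
    rw [Real.sin_sub_pi, Real.sin_sub_int_mul_two_pi] at this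
    linarith

/-- Core statement for continuous functions on the whole plane. -/
theorem plane_zero (F : ℝ × ℝ → ℂ) (hF : Continuous F)
    (hl : ∀ t, (F (0, t)).re ≤ 0) (hr : ∀ t, 0 ≤ (F (1, t)).re)
    (hb : ∀ s, 0 ≤ (F (s, 0)).im) (ht : ∀ s, (F (s, 1)).im ≤ 0) : ∃ p, F p = 0 := by
  by_contra! h0
  obtain ⟨L, hLc, hL⟩ := exists_continuous_log F hF h0
  have hpi := Real.pi_pos
  have hre : ∀ p, (F p).re = Real.exp (L p).re * Real.cos (L p).im := fun p => by
    rw [← hL, Complex.exp_re]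
  have him : ∀ p, (F p).im = Real.exp (L p).re * Real.sin (L p).im := fun p => by
    rw [← hL, Complex.exp_im]
  have hl' : ∀ t, Real.cos (L (0, t)).im ≤ 0 := fun t => by
    have := hl t
    rw [hre] at this
    exact nonpos_of_mul_nonpos_right this (Real.exp_pos _)
  have hr' : ∀ t, 0 ≤ Real.cos (L (1, t)).im := fun t => by
    have := hr t
    rw [hre] at this
    exact nonneg_of_mul_nonneg_right this (Real.exp_pos _)
  have hb' : ∀ s, 0 ≤ Real.sin (L (s, 0)).im := fun s => by
    have := hb s
    rw [him] at this
    exact nonneg_of_mul_nonneg_right this (Real.exp_pos _)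
  have ht' : ∀ s, Real.sin (L (s, 1)).im ≤ 0 := fun s => by
    have := ht s
    rw [him] at this
    exact nonpos_of_mul_nonpos_right this (Real.exp_pos _)
  obtain ⟨k, hk1, hk2⟩ := exists_shift _ (hl' 0) (hb' 0)
  obtain ⟨θ, hθ⟩ : ∃ θ : ℝ × ℝ → ℝ, θ = fun p => (L p).im - k * (2 * Real.pi) := ⟨_, rfl⟩
  have hθc : Continuous θ := by rw [hθ]; fun_prop
  have hsin : ∀ p, Real.sin (θ p) = Real.sin (L p).im := fun p => by
    rw [hθ]; exact Real.sin_sub_int_mul_two_pi _ _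
  have hcos : ∀ p, Real.cos (θ p) = Real.cos (L p).im := fun p => by
    rw [hθ]; exact Real.cos_sub_int_mul_two_pi _ _
  have e1 : Real.pi / 2 ≤ θ (0, 0) := by rw [hθ]; exact hk1
  have e2 : θ (0, 0) ≤ Real.pi := by rw [hθ]; exact hk2
  simp only [← hsin, ← hcos] at hl' hr' hb' ht'
  have b1 := stays_in_band (fun s => θ (s, 0)) (by fun_prop) hb' 0 1 (by linarith) e2
  -- left edge
  have b2 := stays_in_band (fun t => θ (0, t) - Real.pi / 2) (by fun_prop)
    (fun t => by rw [Real.sin_sub_pi_div_two]; linarith [hl' t]) 0 1 (by linarith) (by linarith)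
  -- right edge: starts in `[0, π/2]`
  have c1 : θ (1, 0) ≤ Real.pi / 2 := by
    by_contra! h
    have h4 := Real.cos_neg_of_pi_div_two_lt_of_lt h (by linarith [b1.2])
    linarith [hr' 0]
  have b3 := stays_in_band (fun t => θ (1, t) + Real.pi / 2) (by fun_prop)
    (fun t => by rw [Real.sin_add_pi_div_two]; exact hr' t) 0 1 (by linarith [b1.1]) (by linarith)
  -- top edge
  have c2 : Real.pi ≤ θ (0, 1) := by
    by_contra! h
    have h4 := Real.sin_pos_of_pos_of_lt_pi (x := θ (0, 1)) (by linarith [b2.1]) h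
    linarith [ht' 0]
  have b4 := stays_in_band (fun s => θ (s, 1) - Real.pi) (by fun_prop)
    (fun s => by rw [Real.sin_sub_pi]; linarith [ht' s]) 0 1 (by linarith) (by linarith [b2.2])
  linarith [b3.2, b4.1]

/-- **Crossing lemma.** A continuous path crossing the closed unit square from
the left edge to the right edge must intersect any continuous path crossing it
from the bottom edge to the top edge. -/
theorem paths_crossing_square_must_intersect
    (γ₁ γ₂ : ℝ → ℝ × ℝ)
    (hcont₁ : ContinuousOn γ₁ (Set.Icc (0 : ℝ) 1))
    (hcont₂ : ContinuousOn γ₂ (Set.Icc (0 : ℝ) 1))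
    (hmaps₁ : ∀ t ∈ Set.Icc (0 : ℝ) 1,
      γ₁ t ∈ Set.Icc (0 : ℝ) 1 ×ˢ Set.Icc (0 : ℝ) 1)
    (hmaps₂ : ∀ t ∈ Set.Icc (0 : ℝ) 1,
      γ₂ t ∈ Set.Icc (0 : ℝ) 1 ×ˢ Set.Icc (0 : ℝ) 1)
    (hleft : (γ₁ 0).1 = 0) (hright : (γ₁ 1).1 = 1)
    (hbottom : (γ₂ 0).2 = 0) (htop : (γ₂ 1).2 = 1) :
    ∃ s ∈ Set.Icc (0 : ℝ) 1, ∃ t ∈ Set.Icc (0 : ℝ) 1, γ₁ s = γ₂ t := by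
  have h01 : (0 : ℝ) ≤ 1 := zero_le_one
  obtain ⟨g₁, hg₁⟩ : ∃ g : ℝ → ℝ × ℝ, g = fun s => γ₁ (Set.projIcc 0 1 h01 s) := ⟨_, rfl⟩
  obtain ⟨g₂, hg₂⟩ : ∃ g : ℝ → ℝ × ℝ, g = fun s => γ₂ (Set.projIcc 0 1 h01 s) := ⟨_, rfl⟩
  have c₁ : Continuous g₁ := by
    rw [hg₁]
    exact (continuousOn_iff_continuous_domRestrict.mp hcont₁).comp continuous_projIcc
  have c₂ : Continuous g₂ := by
    rw [hg₂]
    exact (continuousOn_iff_continuous_domRestrict.mp hcont₂).comp continuous_projIcc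
  have m₁ : ∀ s, g₁ s ∈ Set.Icc (0 : ℝ) 1 ×ˢ Set.Icc (0 : ℝ) 1 := fun s => by
    rw [hg₁]; exact hmaps₁ _ (Set.projIcc 0 1 h01 s).2
  have m₂ : ∀ s, g₂ s ∈ Set.Icc (0 : ℝ) 1 ×ˢ Set.Icc (0 : ℝ) 1 := fun s => by
    rw [hg₂]; exact hmaps₂ _ (Set.projIcc 0 1 h01 s).2
  have l₁ : (g₁ 0).1 = 0 := by rw [hg₁]; simpa using hleft
  have r₁ : (g₁ 1).1 = 1 := by rw [hg₁]; simpa using hright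
  have l₂ : (g₂ 0).2 = 0 := by rw [hg₂]; simpa using hbottom
  have r₂ : (g₂ 1).2 = 1 := by rw [hg₂]; simpa using htop
  obtain ⟨⟨s, t⟩, hst⟩ := plane_zero
    (fun p => Complex.equivRealProdCLM.symm (g₁ p.1 - g₂ p.2)) (by fun_prop)
    (fun t => by simpa [l₁] using (m₂ t).1.1)
    (fun t => by simpa [r₁] using (m₂ t).1.2)
    (fun s => by simpa [l₂] using (m₁ s).2.1)
    (fun s => by simpa [r₂] using (m₁ s).2.2)
  have h : g₁ s = g₂ t := by
    apply sub_eq_zero.mp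
    exact (map_eq_zero_iff _ Complex.equivRealProdCLM.symm.injective).mp hst
  rw [hg₁, hg₂] at h
  exact ⟨_, (Set.projIcc 0 1 h01 s).2, _, (Set.projIcc 0 1 h01 t).2, h⟩
end

section
/- Let γ₁, γ₂ : [0,1] → ℝ² be continuously differentiable paths whose images lie in the closed unit square [0,1] × [0,1], with γ₁(0) on the left edge {0} × [0,1], γ₁(1) on the right edge {1} × [0,1], γ₂(0) on the bottom edge [0,1] × {0}, and γ₂(1) on the top edge [0,1] × {1}. Suppose moreover that there are closed convex cones K₁, K₂ ⊆ ℝ² with γ₁'(t) ∈ K₁ and γ₂'(t) ∈ K₂ for all t ∈ [0,1] and (K₁ ∪ (−K₁)) ∩ (K₂ ∪ (−K₂)) = {0}. Then there is exactly one point p ∈ ℝ² lying on both curves, i.e. the intersection of the images of γ₁ and γ₂ is a singleton. -/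
open scoped Pointwise

/-- If `sin ∘ θ` stays nonnegative, then `θ` cannot leave the interval `[0, π]`. -/
lemma angle_stays (θ : ℝ → ℝ) (hθ : Continuous θ) (hs : ∀ u, 0 ≤ Real.sin (θ u)) (a b : ℝ)
    (ha : θ a ∈ Set.Icc 0 Real.pi) : θ b ∈ Set.Icc 0 Real.pi := by
  have hpi := Real.pi_pos
  have key : ∀ v ∈ Set.uIcc (θ a) (θ b), 0 ≤ Real.sin v := by
    intro v hv
    obtain ⟨u, -, rfl⟩ := intermediate_value_uIcc (a := a) (b := b) hθ.continuousOn hv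
    exact hs u
  constructor
  · by_contra! h
    have h1 := key (max (θ b) (-(Real.pi / 2))) (Set.mem_uIcc.2 (Or.inr
      ⟨le_max_left _ _, max_le (by linarith [ha.1]) (by linarith [ha.1])⟩))
    have h2 := Real.sin_neg_of_neg_of_neg_pi_lt (x := max (θ b) (-(Real.pi / 2)))
      (max_lt h (by linarith)) (lt_of_lt_of_le (by linarith) (le_max_right _ _))
    linarith
  · by_contra! h
    have h1 := key (min (θ b) (Real.pi + Real.pi / 2)) (Set.mem_uIcc.2 (Or.inl
      ⟨le_min (by linarith [ha.2]) (by linarith [ha.2]), min_le_left _ _⟩))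
    have h2 := Real.sin_pos_of_pos_of_lt_pi (x := min (θ b) (Real.pi + Real.pi / 2) - Real.pi)
      (by have := lt_min h (show Real.pi < Real.pi + Real.pi / 2 by linarith); linarith)
      (by have := min_le_right (θ b) (Real.pi + Real.pi / 2); linarith)
    rw [Real.sin_sub_pi] at h2
    linarith

/-- Two-dimensional Poincaré–Miranda theorem, in the form needed here. -/
lemma exists_zero_of_signs (f : ℝ × ℝ → ℂ) (hf : Continuous f)
    (hl : ∀ t, (f (0, t)).re ≤ 0) (hr : ∀ t, 0 ≤ (f (1, t)).re)
    (hb : ∀ s, 0 ≤ (f (s, 0)).im) (ht : ∀ s, (f (s, 1)).im ≤ 0) :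
    ∃ x, f x = 0 := by
  by_contra! hne
  obtain ⟨G, ⟨hG0, hG⟩, -⟩ := Complex.isCoveringMapOn_exp.existsUnique_continuousMap_lifts
    (⟨f, hf⟩ : C(ℝ × ℝ, ℂ))
    (a₀ := ((0, 0) : ℝ × ℝ)) (e₀ := Complex.log (f (0, 0)))
    (Complex.exp_log (hne _)) (fun x => by simpa using hne x)
  have hG' : ∀ x, Complex.exp (G x) = f x := fun x => congrFun hG x
  set θ : ℝ × ℝ → ℝ := fun x => (G x).im with hθdef
  have hθ : Continuous θ := Complex.continuous_im.comp G.continuous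
  have hre : ∀ x, (f x).re = Real.exp (G x).re * Real.cos (θ x) := fun x => by
    rw [← hG', Complex.exp_re]
  have him : ∀ x, (f x).im = Real.exp (G x).re * Real.sin (θ x) := fun x => by
    rw [← hG', Complex.exp_im]
  have cl : ∀ t, Real.cos (θ (0, t)) ≤ 0 := fun t => by
    have := hl t; rw [hre] at this
    exact nonpos_of_mul_nonpos_right this (Real.exp_pos _)
  have cr : ∀ t, 0 ≤ Real.cos (θ (1, t)) := fun t => by
    have := hr t; rw [hre] at this
    exact nonneg_of_mul_nonneg_right this (Real.exp_pos _)
  have cb : ∀ s, 0 ≤ Real.sin (θ (s, 0)) := fun t => by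
    have := hb t; rw [him] at this
    exact nonneg_of_mul_nonneg_right this (Real.exp_pos _)
  have ct : ∀ s, Real.sin (θ (s, 1)) ≤ 0 := fun t => by
    have := ht t; rw [him] at this
    exact nonpos_of_mul_nonpos_right this (Real.exp_pos _)
  have hpi := Real.pi_pos
  -- corner (0,0)
  have a1 : θ (0, 0) ∈ Set.Icc 0 Real.pi := by
    have h0 : θ (0, 0) = (f (0, 0)).arg := by
      simp only [hθdef, hG0, Complex.log_im]
    rw [h0]
    exact ⟨Complex.arg_nonneg_iff.2 (hb 0), Complex.arg_le_pi _⟩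
  have a2 : Real.pi / 2 ≤ θ (0, 0) := by
    by_contra! h
    have := Real.cos_pos_of_mem_Ioo ⟨by linarith [a1.1], h⟩
    linarith [cl 0]
  -- corner (1,0)
  have b1 := angle_stays (fun s => θ (s, 0)) (by fun_prop) cb 0 1 a1
  have b2 : θ (1, 0) ≤ Real.pi / 2 := by
    by_contra! h
    have := Real.cos_neg_of_pi_div_two_lt_of_lt h (by linarith [b1.2])
    linarith [cr 0]
  -- corner (1,1)
  have c1 := angle_stays (fun t => θ (1, t) + Real.pi / 2) (by fun_prop)
    (fun t => by rw [Real.sin_add_pi_div_two]; exact cr t) 0 1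
    ⟨by linarith [b1.1], by linarith⟩
  have c2 : θ (1, 1) ≤ 0 := by
    by_contra! h
    have := Real.sin_pos_of_pos_of_lt_pi h (by linarith [c1.2])
    linarith [ct 1]
  -- corner (0,1)
  have d1 := angle_stays (fun s => θ (s, 1) + Real.pi) (by fun_prop)
    (fun s => by rw [Real.sin_add_pi]; linarith [ct s]) 1 0
    ⟨by linarith [c1.1], by linarith⟩
  have d2 : θ (0, 1) ≤ -(Real.pi / 2) := by
    by_contra! h
    have := Real.cos_pos_of_mem_Ioo ⟨h, by linarith [d1.2]⟩
    linarith [cl 1]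
  -- back to (0,0)
  have e1 := angle_stays (fun t => θ (0, t) + Real.pi / 2 + Real.pi) (by fun_prop)
    (fun t => by rw [Real.sin_add_pi, Real.sin_add_pi_div_two]; linarith [cl t]) 1 0
    ⟨by linarith [d1.1], by linarith⟩
  linarith [e1.2]

/-- Increments of a path whose velocity lies in a closed convex cone lie in that cone. -/
lemma increment_mem_cone (γ γ' : ℝ → ℝ × ℝ) (K : Set (ℝ × ℝ))
    (hd : ∀ t ∈ Set.Icc (0 : ℝ) 1, HasDerivWithinAt γ (γ' t) (Set.Icc (0 : ℝ) 1) t)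
    (hKc : IsClosed K) (hKv : Convex ℝ K) (hK : ∀ c : ℝ, 0 ≤ c → ∀ w ∈ K, c • w ∈ K)
    (hm : ∀ t ∈ Set.Icc (0 : ℝ) 1, γ' t ∈ K)
    (a b : ℝ) (ha : a ∈ Set.Icc (0 : ℝ) 1) (hb : b ∈ Set.Icc (0 : ℝ) 1) (hab : a < b) :
    γ b - γ a ∈ K := by
  have hpos : 0 < b - a := sub_pos.2 hab
  have key : (b - a)⁻¹ • (γ b - γ a) ∈ K := by
    by_contra hn
    obtain ⟨f, u, hfu, hu⟩ := geometric_hahn_banach_closed_point hKv hKc hn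
    have hd' : ∀ t ∈ Set.Icc (0 : ℝ) 1,
        HasDerivWithinAt (fun t => f (γ t)) (f (γ' t)) (Set.Icc (0 : ℝ) 1) t := fun t ht =>
      f.hasFDerivAt.comp_hasDerivWithinAt t (hd t ht)
    obtain ⟨c, hc, hceq⟩ := exists_hasDerivAt_eq_slope (fun t => f (γ t)) (fun t => f (γ' t)) hab
      (fun t ht => ((hd' t ⟨ha.1.trans ht.1, ht.2.trans hb.2⟩).continuousWithinAt).mono
        (Set.Icc_subset_Icc ha.1 hb.2))
      (fun t ht => (hd' t ⟨ha.1.trans ht.1.le, ht.2.le.trans hb.2⟩).hasDerivAt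
        (Icc_mem_nhds (ha.1.trans_lt ht.1) (ht.2.trans_le hb.2)))
    have h1 := hfu _ (hm c ⟨ha.1.trans hc.1.le, hc.2.le.trans hb.2⟩)
    rw [map_smul, map_sub, smul_eq_mul] at hu
    rw [hceq, div_eq_inv_mul] at h1
    linarith
  have := hK (b - a) hpos.le _ key
  rwa [smul_smul, mul_inv_cancel₀ hpos.ne', one_smul] at this

/-- Any two points of such a path differ by an element of `K ∪ -K`. -/
lemma diff_mem_double_cone (γ γ' : ℝ → ℝ × ℝ) (K : Set (ℝ × ℝ))
    (hd : ∀ t ∈ Set.Icc (0 : ℝ) 1, HasDerivWithinAt γ (γ' t) (Set.Icc (0 : ℝ) 1) t)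
    (hKc : IsClosed K) (hKv : Convex ℝ K) (hK : ∀ c : ℝ, 0 ≤ c → ∀ w ∈ K, c • w ∈ K)
    (hm : ∀ t ∈ Set.Icc (0 : ℝ) 1, γ' t ∈ K)
    (a b : ℝ) (ha : a ∈ Set.Icc (0 : ℝ) 1) (hb : b ∈ Set.Icc (0 : ℝ) 1) :
    γ b - γ a ∈ K ∪ -K := by
  rcases lt_trichotomy a b with h | h | h
  · exact Or.inl (increment_mem_cone γ γ' K hd hKc hKv hK hm a b ha hb h)
  · left
    have := hK 0 le_rfl _ (hm a ha)
    rw [zero_smul] at this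
    rwa [h, sub_self]
  · right
    rw [Set.mem_neg, neg_sub]
    exact increment_mem_cone γ γ' K hd hKc hKv hK hm b a hb ha h

/-- A C¹ path crossing the unit square left-to-right and a C¹ path crossing it
bottom-to-top, whose tangent vectors lie in closed convex cones with no nonzero
parallel vectors in common, intersect in exactly one point. -/
theorem transverse_paths_crossing_square_unique_intersection
    (γ₁ γ₂ γ₁' γ₂' : ℝ → ℝ × ℝ)
    (hderiv₁ : ∀ t ∈ Set.Icc (0 : ℝ) 1,
      HasDerivWithinAt γ₁ (γ₁' t) (Set.Icc (0 : ℝ) 1) t)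
    (hderiv₂ : ∀ t ∈ Set.Icc (0 : ℝ) 1,
      HasDerivWithinAt γ₂ (γ₂' t) (Set.Icc (0 : ℝ) 1) t)
    (hcont₁ : ContinuousOn γ₁' (Set.Icc (0 : ℝ) 1))
    (hcont₂ : ContinuousOn γ₂' (Set.Icc (0 : ℝ) 1))
    (hmaps₁ : ∀ t ∈ Set.Icc (0 : ℝ) 1,
      γ₁ t ∈ Set.Icc (0 : ℝ) 1 ×ˢ Set.Icc (0 : ℝ) 1)
    (hmaps₂ : ∀ t ∈ Set.Icc (0 : ℝ) 1,
      γ₂ t ∈ Set.Icc (0 : ℝ) 1 ×ˢ Set.Icc (0 : ℝ) 1)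
    (hleft : (γ₁ 0).1 = 0) (hright : (γ₁ 1).1 = 1)
    (hbottom : (γ₂ 0).2 = 0) (htop : (γ₂ 1).2 = 1)
    (K₁ K₂ : Set (ℝ × ℝ))
    (hK₁closed : IsClosed K₁) (hK₁convex : Convex ℝ K₁)
    (hK₁cone : ∀ c : ℝ, 0 ≤ c → ∀ w ∈ K₁, c • w ∈ K₁)
    (hK₂closed : IsClosed K₂) (hK₂convex : Convex ℝ K₂)
    (hK₂cone : ∀ c : ℝ, 0 ≤ c → ∀ w ∈ K₂, c • w ∈ K₂)
    (hmem₁ : ∀ t ∈ Set.Icc (0 : ℝ) 1, γ₁' t ∈ K₁)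
    (hmem₂ : ∀ t ∈ Set.Icc (0 : ℝ) 1, γ₂' t ∈ K₂)
    (htrans : (K₁ ∪ -K₁) ∩ (K₂ ∪ -K₂) = {0}) :
    ∃ p : ℝ × ℝ,
      (γ₁ '' Set.Icc (0 : ℝ) 1) ∩ (γ₂ '' Set.Icc (0 : ℝ) 1) = {p} := by
  have hc₁ : ContinuousOn γ₁ (Set.Icc (0 : ℝ) 1) := fun t ht => (hderiv₁ t ht).continuousWithinAt
  have hc₂ : ContinuousOn γ₂ (Set.Icc (0 : ℝ) 1) := fun t ht => (hderiv₂ t ht).continuousWithinAt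
  set π : ℝ → ℝ := fun t => (Set.projIcc (0 : ℝ) 1 zero_le_one t : ℝ) with hπ
  have hπm : ∀ t, π t ∈ Set.Icc (0 : ℝ) 1 := fun t => (Set.projIcc (0 : ℝ) 1 zero_le_one t).2
  have hπc : Continuous π := continuous_subtype_val.comp continuous_projIcc
  have hπ0 : π 0 = 0 := by simp [hπ]
  have hπ1 : π 1 = 1 := by simp [hπ]
  have hg₁ : Continuous (fun t => γ₁ (π t)) := hc₁.comp_continuous hπc hπm
  have hg₂ : Continuous (fun t => γ₂ (π t)) := hc₂.comp_continuous hπc hπm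
  obtain ⟨x, hx⟩ := exists_zero_of_signs
    (fun x => Complex.equivRealProdCLM.symm (γ₁ (π x.1) - γ₂ (π x.2)))
    (Complex.equivRealProdCLM.symm.continuous.comp
      ((hg₁.comp continuous_fst).sub (hg₂.comp continuous_snd)))
    (fun t => by
      have := (hmaps₂ _ (hπm t)).1.1
      change (γ₁ (π 0)).1 - (γ₂ (π t)).1 ≤ 0
      rw [hπ0, hleft]; linarith)
    (fun t => by
      have := (hmaps₂ _ (hπm t)).1.2
      change 0 ≤ (γ₁ (π 1)).1 - (γ₂ (π t)).1
      rw [hπ1, hright]; linarith)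
    (fun s => by
      have := (hmaps₁ _ (hπm s)).2.1
      change 0 ≤ (γ₁ (π s)).2 - (γ₂ (π 0)).2
      rw [hπ0, hbottom]; linarith)
    (fun s => by
      have := (hmaps₁ _ (hπm s)).2.2
      change (γ₁ (π s)).2 - (γ₂ (π 1)).2 ≤ 0
      rw [hπ1, htop]; linarith)
  have hx' : γ₁ (π x.1) = γ₂ (π x.2) := by
    have := (map_eq_zero_iff _ Complex.equivRealProdCLM.symm.injective).1 hx
    exact sub_eq_zero.1 this
  refine ⟨γ₁ (π x.1), Set.eq_singleton_iff_unique_mem.2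
    ⟨⟨⟨_, hπm _, rfl⟩, ⟨_, hπm _, hx'.symm⟩⟩, ?_⟩⟩
  rintro q ⟨⟨s, hs, rfl⟩, ⟨t, ht, hst⟩⟩
  have h1 := diff_mem_double_cone γ₁ γ₁' K₁ hderiv₁ hK₁closed hK₁convex hK₁cone hmem₁
    (π x.1) s (hπm _) hs
  have h2 := diff_mem_double_cone γ₂ γ₂' K₂ hderiv₂ hK₂closed hK₂convex hK₂cone hmem₂
    (π x.2) t (hπm _) ht
  rw [hst, ← hx'] at h2
  have h3 : γ₁ s - γ₁ (π x.1) ∈ ({0} : Set (ℝ × ℝ)) := htrans ▸ ⟨h1, h2⟩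
  exact sub_eq_zero.1 h3
end
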